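/- Let (]a_i,b_i[)_{i∈I} be a family of nonempty, pairwise disjoint open subintervals of [0,1], (N_i)_{i∈I} a family of functions from [0,1] to [0,1], and N_I the function obtained by the ordinal-sum formula from these data. Then every N_i (i ∈ I) is a strictly decreasing fuzzy negation if and only if N_I is a strictly decreasing fuzzy negation such that N_I(a_i) = 1−a_i and N_I(b_i) = 1−b_i for each i ∈ I. -/

import Mathlib

/-!
Since every `N i` is normalized at `0` and `1`, the ordinal sum agrees with `x ↦ 1 - x` at all the
endpoints `a i`, `b i` as well as outside the intervals, and on each `[a i, b i]` it is an
increasing affine rescaling of `N i`. Two points `x < y` that share no interval are therefore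
separated by comparing `NI x` and `NI y` with the values of `1 - x` at the right endpoint of the
interval around `x` and the left endpoint of the interval around `y`. If these two intervals
overlap, the right endpoint of the first belongs to the second, and it is enough to pass through
that one endpoint.
-/

open Set

/-- A fuzzy negation: a function `N : [0,1] → [0,1]` (here modeled on `ℝ`)
with `N 0 = 1`, `N 1 = 0` and `N` decreasing on `[0,1]`. -/
def FuzzyNegation (N : ℝ → ℝ) : Prop :=
  (∀ x ∈ Icc (0:ℝ) 1, N x ∈ Icc (0:ℝ) 1) ∧
  N 0 = 1 ∧ N 1 = 0 ∧
  (∀ x ∈ Icc (0:ℝ) 1, ∀ y ∈ Icc (0:ℝ) 1, x ≤ y → N y ≤ N x)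

/-- `(]a i, b i[)_{i ∈ I}` is a family of nonempty, pairwise disjoint open
subintervals of `[0,1]`. -/
def GoodFamily {I : Type*} (a b : I → ℝ) : Prop :=
  (∀ i, 0 ≤ a i ∧ a i < b i ∧ b i ≤ 1) ∧
  (∀ i j, i ≠ j → Disjoint (Ioo (a i) (b i)) (Ioo (a j) (b j)))

/-- `NI` is the ordinal sum of the summands `(a i, b i, N i)_{i ∈ I}`:
`NI x = (1 - b i) + (b i - a i) * N i ((x - a i)/(b i - a i))` whenever
`x ∈ [a i, b i]`, and `NI x = 1 - x` otherwise. -/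
def IsOrdinalSum {I : Type*} (a b : I → ℝ) (N : I → ℝ → ℝ) (NI : ℝ → ℝ) : Prop :=
  ∀ x ∈ Icc (0:ℝ) 1,
    (∀ i, x ∈ Icc (a i) (b i) →
      NI x = (1 - b i) + (b i - a i) * N i ((x - a i) / (b i - a i))) ∧
    ((∀ i, x ∉ Icc (a i) (b i)) → NI x = 1 - x)

section Gluing

variable {ι α β : Type*} [LinearOrder α] [Preorder β] {f g : α → β} {s : Set α} {a b : ι → α}

lemma apply_lt_of_eq_of_eqOn_sdiff_iUnion_Icc (hg : StrictAntiOn g s) (ha : ∀ i, a i ∈ s)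
    (hfa : ∀ i, f (a i) = g (a i)) (hf : ∀ i, StrictAntiOn f (Icc (a i) (b i)))
    (hfg : EqOn f g (s \ ⋃ i, Icc (a i) (b i))) {x y : α} (hx : x ∈ s) (hy : y ∈ s)
    (hfx : f x = g x) (hxy : x < y) : f y < f x := by
  by_cases hyI : ∃ i, y ∈ Icc (a i) (b i)
  · obtain ⟨i, hyi⟩ := hyI
    have hai : a i ∈ Icc (a i) (b i) := left_mem_Icc.2 (hyi.1.trans hyi.2)
    rcases le_or_gt (a i) x with hax | hxa
    · exact hf i ⟨hax, hxy.le.trans hyi.2⟩ hyi hxy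
    · calc
        f y ≤ f (a i) := (hf i).antitoneOn hai hyi hyi.1
        _ = g (a i) := hfa i
        _ < g x := hg hx (ha i) hxa
        _ = f x := hfx.symm
  · have hfy : f y = g y := hfg ⟨hy, by simpa only [mem_iUnion] using hyI⟩
    rw [hfx, hfy]
    exact hg hx hy hxy

lemma strictAntiOn_of_eqOn_sdiff_iUnion_Icc (hg : StrictAntiOn g s) (ha : ∀ i, a i ∈ s)
    (hb : ∀ i, b i ∈ s) (hfa : ∀ i, f (a i) = g (a i)) (hfb : ∀ i, f (b i) = g (b i))
    (hf : ∀ i, StrictAntiOn f (Icc (a i) (b i)))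
    (hfg : EqOn f g (s \ ⋃ i, Icc (a i) (b i))) : StrictAntiOn f s := by
  intro x hx y hy hxy
  by_cases hxI : ∃ i, x ∈ Icc (a i) (b i)
  · obtain ⟨i, hxi⟩ := hxI
    have hbi : b i ∈ Icc (a i) (b i) := right_mem_Icc.2 (hxi.1.trans hxi.2)
    rcases le_or_gt y (b i) with hyb | hby
    · exact hf i hxi ⟨hxi.1.trans hxy.le, hyb⟩ hxy
    · calc
        f y < f (b i) :=
          apply_lt_of_eq_of_eqOn_sdiff_iUnion_Icc hg ha hfa hf hfg (hb i) hy (hfb i) hby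
        _ ≤ f x := (hf i).antitoneOn hxi hbi hxi.2
  · have hfx : f x = g x := hfg ⟨hx, by simpa only [mem_iUnion] using hxI⟩
    exact apply_lt_of_eq_of_eqOn_sdiff_iUnion_Icc hg ha hfa hf hfg hx hy hfx hxy

end Gluing

section Rescaling

variable {𝕜 : Type*} [Field 𝕜]

/-- The summand `n`, transported from the unit square to the square `[a, b] × [1 - b, 1 - a]` by
increasing affine maps. It is meant for `a < b`; at `a = b` the division by zero makes it the
constant `1 - b`. -/
def rescaledSummand (a b : 𝕜) (n : 𝕜 → 𝕜) (x : 𝕜) : 𝕜 :=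
  (1 - b) + (b - a) * n ((x - a) / (b - a))

variable {a b : 𝕜} {n : 𝕜 → 𝕜}

lemma rescaledSummand_mul_add (hab : a ≠ b) (t : 𝕜) :
    rescaledSummand a b n ((b - a) * t + a) = (1 - b) + (b - a) * n t := by
  rw [rescaledSummand, add_sub_cancel_right, mul_div_cancel_left₀ _ (sub_ne_zero.2 hab.symm)]

lemma rescaledSummand_left_eq_iff (hab : a ≠ b) :
    rescaledSummand a b n a = 1 - a ↔ n 0 = 1 := by
  have hval : rescaledSummand a b n a = (1 - b) + (b - a) * n 0 := by
    simpa only [mul_zero, zero_add] using rescaledSummand_mul_add (n := n) hab 0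
  have htop : 1 - a = (1 - b) + (b - a) * 1 := by ring
  rw [hval, htop, add_right_inj, mul_right_inj' (sub_ne_zero.2 hab.symm)]

lemma rescaledSummand_right_eq_iff (hab : a ≠ b) :
    rescaledSummand a b n b = 1 - b ↔ n 1 = 0 := by
  have hval : rescaledSummand a b n b = (1 - b) + (b - a) * n 1 := by
    simpa only [mul_one, sub_add_cancel] using rescaledSummand_mul_add (n := n) hab 1
  rw [hval, add_eq_left, mul_eq_zero_iff_left (sub_ne_zero.2 hab.symm)]

lemma strictAntiOn_rescaledSummand_iff [LinearOrder 𝕜] [IsStrictOrderedRing 𝕜] (hab : a < b) :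
    StrictAntiOn (rescaledSummand a b n) (Icc a b) ↔ StrictAntiOn n (Icc 0 1) := by
  have hpos : 0 < b - a := sub_pos.2 hab
  have himage : Icc a b = (fun t => (b - a) * t + a) '' Icc 0 1 := by
    rw [image_affine_Icc' hpos, mul_zero, zero_add, mul_one, sub_add_cancel]
  simp only [StrictAntiOn, himage, forall_mem_image, rescaledSummand_mul_add hab.ne,
    add_lt_add_iff_left, add_lt_add_iff_right, mul_lt_mul_iff_right₀ hpos]

end Rescaling

namespace FuzzyNegation

lemma iff_antitoneOn {N : ℝ → ℝ} :
    FuzzyNegation N ↔ N 0 = 1 ∧ N 1 = 0 ∧ AntitoneOn N (Icc 0 1) := by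
  constructor
  · rintro ⟨-, h0, h1, hN⟩
    exact ⟨h0, h1, fun x hx y hy => hN x hx y hy⟩
  · rintro ⟨h0, h1, hN⟩
    refine ⟨fun x hx => ⟨?_, ?_⟩, h0, h1, fun x hx y hy => hN hx hy⟩
    · simpa only [h1] using hN hx (right_mem_Icc.2 zero_le_one) hx.2
    · simpa only [h0] using hN (left_mem_Icc.2 zero_le_one) hx hx.1

lemma and_strictAntiOn_iff {N : ℝ → ℝ} :
    FuzzyNegation N ∧ StrictAntiOn N (Icc 0 1) ↔
      N 0 = 1 ∧ N 1 = 0 ∧ StrictAntiOn N (Icc 0 1) := by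
  rw [iff_antitoneOn]
  exact ⟨fun ⟨⟨h0, h1, _⟩, hN⟩ => ⟨h0, h1, hN⟩,
    fun ⟨h0, h1, hN⟩ => ⟨⟨h0, h1, hN.antitoneOn⟩, hN⟩⟩

end FuzzyNegation

namespace IsOrdinalSum

variable {I : Type*} {a b : I → ℝ} {N : I → ℝ → ℝ} {NI : ℝ → ℝ}

lemma eqOn_rescaledSummand (hNI : IsOrdinalSum a b N NI) {i : I} (ha : 0 ≤ a i) (hb : b i ≤ 1) :
    EqOn NI (rescaledSummand (a i) (b i) (N i)) (Icc (a i) (b i)) :=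
  fun x hx => (hNI x (Icc_subset_Icc ha hb hx)).1 i hx

lemma eqOn_one_sub_sdiff_iUnion_Icc (hNI : IsOrdinalSum a b N NI) :
    EqOn NI (fun x => 1 - x) (Icc 0 1 \ ⋃ i, Icc (a i) (b i)) :=
  fun x hx => (hNI x hx.1).2 (by simpa only [mem_iUnion, not_exists] using hx.2)

lemma fuzzyNegation_summand_iff (hNI : IsOrdinalSum a b N NI) {i : I} (ha : 0 ≤ a i)
    (hab : a i < b i) (hb : b i ≤ 1) :
    FuzzyNegation (N i) ∧ StrictAntiOn (N i) (Icc 0 1) ↔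
      (NI (a i) = 1 - a i ∧ NI (b i) = 1 - b i) ∧ StrictAntiOn NI (Icc (a i) (b i)) := by
  have heq := hNI.eqOn_rescaledSummand ha hb
  rw [FuzzyNegation.and_strictAntiOn_iff, heq (left_mem_Icc.2 hab.le),
    heq (right_mem_Icc.2 hab.le), heq.congr_strictAntiOn, rescaledSummand_left_eq_iff hab.ne,
    rescaledSummand_right_eq_iff hab.ne, strictAntiOn_rescaledSummand_iff hab, and_assoc]

lemma eq_one_sub_of_forall_notMem_Ioo (hNI : IsOrdinalSum a b N NI)
    (hend : ∀ i, NI (a i) = 1 - a i ∧ NI (b i) = 1 - b i) {x : ℝ} (hx : x ∈ Icc 0 1)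
    (hxI : ∀ i, x ∉ Ioo (a i) (b i)) : NI x = 1 - x := by
  by_cases hmem : ∃ i, x ∈ Icc (a i) (b i)
  · obtain ⟨i, hxi⟩ := hmem
    rcases eq_endpoints_or_mem_Ioo_of_mem_Icc hxi with rfl | rfl | hxo
    · exact (hend i).1
    · exact (hend i).2
    · exact absurd hxo (hxI i)
  · exact (hNI x hx).2 (not_exists.1 hmem)

lemma fuzzyNegation_and_strictAntiOn (hNI : IsOrdinalSum a b N NI) (ha : ∀ i, a i ∈ Icc 0 1)
    (hb : ∀ i, b i ∈ Icc 0 1) (hend : ∀ i, NI (a i) = 1 - a i ∧ NI (b i) = 1 - b i)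
    (hanti : ∀ i, StrictAntiOn NI (Icc (a i) (b i))) :
    FuzzyNegation NI ∧ StrictAntiOn NI (Icc 0 1) := by
  have h0 : NI 0 = 1 - 0 := hNI.eq_one_sub_of_forall_notMem_Ioo hend
    (left_mem_Icc.2 zero_le_one) fun i hi => (ha i).1.not_gt hi.1
  have h1 : NI 1 = 1 - 1 := hNI.eq_one_sub_of_forall_notMem_Ioo hend
    (right_mem_Icc.2 zero_le_one) fun i hi => (hb i).2.not_gt hi.2
  have hsub : StrictAntiOn (fun x : ℝ => 1 - x) (Icc 0 1) :=
    fun _ _ _ _ hxy => sub_lt_sub_left hxy 1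
  exact FuzzyNegation.and_strictAntiOn_iff.2 ⟨by rw [h0, sub_zero], by rw [h1, sub_self],
    strictAntiOn_of_eqOn_sdiff_iUnion_Icc hsub ha hb (fun i => (hend i).1) (fun i => (hend i).2)
      hanti hNI.eqOn_one_sub_sdiff_iUnion_Icc⟩

end IsOrdinalSum

theorem ordinalSum_strictAnti_fuzzyNegation_iff_general {I : Type*} {a b : I → ℝ}
    {N : I → ℝ → ℝ} {NI : ℝ → ℝ} (hsub : ∀ i, 0 ≤ a i ∧ a i < b i ∧ b i ≤ 1)
    (hNI : IsOrdinalSum a b N NI) :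
    (∀ i, FuzzyNegation (N i) ∧ StrictAntiOn (N i) (Icc (0:ℝ) 1)) ↔
      ((FuzzyNegation NI ∧ StrictAntiOn NI (Icc (0:ℝ) 1)) ∧
        ∀ i, NI (a i) = 1 - a i ∧ NI (b i) = 1 - b i) := by
  have hsummand i := hNI.fuzzyNegation_summand_iff (hsub i).1 (hsub i).2.1 (hsub i).2.2
  have ha i : a i ∈ Icc (0:ℝ) 1 := ⟨(hsub i).1, (hsub i).2.1.le.trans (hsub i).2.2⟩
  have hb i : b i ∈ Icc (0:ℝ) 1 := ⟨(hsub i).1.trans (hsub i).2.1.le, (hsub i).2.2⟩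
  simp only [hsummand, forall_and (q := fun i => StrictAntiOn NI (Icc (a i) (b i)))]
  constructor
  · rintro ⟨hend, hanti⟩
    exact ⟨hNI.fuzzyNegation_and_strictAntiOn ha hb hend hanti, hend⟩
  · rintro ⟨⟨-, hanti⟩, hend⟩
    exact ⟨hend, fun i => hanti.mono (Icc_subset_Icc (ha i).1 (hb i).2)⟩

theorem ordinalSum_strictAnti_fuzzyNegation_iff {I : Type*} (a b : I → ℝ)
    (N : I → ℝ → ℝ) (NI : ℝ → ℝ)
    (hfam : GoodFamily a b)
    (hmaps : ∀ i, ∀ x ∈ Icc (0:ℝ) 1, N i x ∈ Icc (0:ℝ) 1)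
    (hNI : IsOrdinalSum a b N NI) :
    (∀ i, FuzzyNegation (N i) ∧ StrictAntiOn (N i) (Icc (0:ℝ) 1)) ↔
      ((FuzzyNegation NI ∧ StrictAntiOn NI (Icc (0:ℝ) 1)) ∧
        ∀ i, NI (a i) = 1 - a i ∧ NI (b i) = 1 - b i) :=
  ordinalSum_strictAnti_fuzzyNegation_iff_general hfam.1 hNI
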